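/- arXiv:1209.1761 — 2 statements merged into one kernel-verified Lean document; each statement's English description precedes it below -/
import Mathlib

section
/- (Proposition 1, part (b)) For all b, b' ∈ B with φ_{b'} < 1, the Green's function of A ∪ B satisfies G_B(b,b') ≤ G_{A∪B}(b,b') ≤ G_B(b,b') + (φ_b / (1 − φ_{b'})) · G_B(b',b'). -/
open MeasureTheory ENNReal

/-- The first hitting time of the set `D` along the path `s`, valued in `ℕ∞`
(`⊤` if the path never visits `D`). -/
noncomputable def hitTime {Ω : Type*} (D : Set Ω) (s : ℕ → Ω) : ℕ∞ :=
  ⨅ (k : ℕ) (_ : s k ∈ D), (k : ℕ∞)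

/-- The path of the walk started at `x` with steps `ξ` : `S_n = x + ∑_{j<n} ξ j`. -/
def walk {Ω : Type*} [AddCommGroup Ω] (x : Ω) (ξ : ℕ → Ω) (n : ℕ) : Ω :=
  x + ∑ j ∈ Finset.range n, ξ j

/-- A random walk on a group `Ω`, described by the common law `ν` of its i.i.d.
steps together with the joint law `μ` of the step sequence (characterized on
cylinder sets as the product of `ν`'s). -/
structure RandomWalk (Ω : Type*) [AddCommGroup Ω] [MeasurableSpace Ω] where
  ν : Measure Ω
  probν : IsProbabilityMeasure ν
  μ : Measure (ℕ → Ω)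
  probμ : IsProbabilityMeasure μ
  iid : ∀ (n : ℕ) (f : Fin n → Ω),
    μ {ξ | ∀ i : Fin n, ξ (i : ℕ) = f i} = ∏ i : Fin n, ν {f i}

variable {Ω : Type*} [AddCommGroup Ω] [MeasurableSpace Ω]

/-- `P^x(θ)` : the probability that the path `(S_n)` of the walk started at `x`
has the property `θ`. -/
noncomputable def RandomWalk.P (W : RandomWalk Ω) (x : Ω) (θ : Set (ℕ → Ω)) : ℝ≥0∞ :=
  W.μ {ξ | walk x ξ ∈ θ}

/-- `E^x(T_D)` : the expected hitting time of `D` for the walk started at `x`. -/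
noncomputable def RandomWalk.E (W : RandomWalk Ω) (x : Ω) (D : Set Ω) : ℝ≥0∞ :=
  ∫⁻ ξ, (hitTime D (walk x ξ) : ℝ≥0∞) ∂W.μ

/-- The truncated Green's function `G_D(x,y) = ∑_{j≥0} P^x(S_j = y, j < T_{Dᶜ})`. -/
noncomputable def RandomWalk.G (W : RandomWalk Ω) (D : Set Ω) (x y : Ω) : ℝ≥0∞ :=
  ∑' j : ℕ, W.P x {s | s j = y ∧ (j : ℕ∞) < hitTime Dᶜ s}

/-- The hitting distribution `H_D(x,y) = P^x(S_{T_D} = y)`. -/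
noncomputable def RandomWalk.H (W : RandomWalk Ω) (D : Set Ω) (x y : Ω) : ℝ≥0∞ :=
  W.P x {s | ∃ k : ℕ, hitTime D s = (k : ℕ∞) ∧ s k = y}

def consPath {Ω : Type*} (x : Ω) (s : ℕ → Ω) : ℕ → Ω
  | 0 => x
  | (n+1) => s n

theorem measurable_consPath {Ω : Type*} [MeasurableSpace Ω] (x : Ω) :
    Measurable (consPath x) := by
  rw [measurable_pi_iff]
  intro n
  cases n with
  | zero => exact measurable_const
  | succ n => exact measurable_pi_apply n

theorem walk_consPath {Ω : Type*} [AddCommGroup Ω] (x z : Ω) (ξ : ℕ → Ω) :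
    walk x (consPath z ξ) = consPath x (walk (x + z) ξ) := by
  funext n
  cases n with
  | zero => simp [walk, consPath]
  | succ n =>
    simp only [walk, consPath, Finset.sum_range_succ']
    abel

theorem measurable_walk {Ω : Type*} [AddCommGroup Ω] [Countable Ω] [MeasurableSpace Ω]
    [MeasurableSingletonClass Ω] (x : Ω) : Measurable (walk x) := by
  rw [measurable_pi_iff]
  intro n
  induction n with
  | zero => simp [walk]
  | succ n ih =>
    have : (fun ξ : ℕ → Ω => walk x ξ (n+1)) = fun ξ => (fun p : Ω × Ω => p.1 + p.2) (walk x ξ n, ξ n) := by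
      funext ξ; simp [walk, Finset.sum_range_succ, add_assoc]
    rw [this]
    exact (Measurable.of_discrete (f := fun p : Ω × Ω => p.1 + p.2)).comp (ih.prodMk (measurable_pi_apply n))

def cyls (Ω : Type*) : Set (Set (ℕ → Ω)) :=
  {S | ∃ (n : ℕ) (f : Fin n → Ω), S = {ξ | ∀ i : Fin n, ξ (i : ℕ) = f i}}

theorem cyls_pi (Ω : Type*) : IsPiSystem (cyls Ω) := by
  have key : ∀ (n m : ℕ) (f : Fin n → Ω) (g : Fin m → Ω), n ≤ m →
      ({ξ : ℕ → Ω | ∀ i : Fin n, ξ (i : ℕ) = f i} ∩ {ξ | ∀ i : Fin m, ξ (i : ℕ) = g i}).Nonempty →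
      {ξ : ℕ → Ω | ∀ i : Fin n, ξ (i : ℕ) = f i} ∩ {ξ | ∀ i : Fin m, ξ (i : ℕ) = g i} =
        {ξ | ∀ i : Fin m, ξ (i : ℕ) = g i} := by
    rintro n m f g hnm ⟨η, h1, h2⟩
    apply Set.inter_eq_right.2
    intro ξ hξ i
    have e1 := hξ ⟨i, by omega⟩
    have e2 := h2 ⟨i, by omega⟩
    have e3 := h1 i
    simp only at e1 e2 e3
    rw [e1, ← e2, e3]
  rintro _ ⟨n, f, rfl⟩ _ ⟨m, g, rfl⟩ h
  rcases le_total n m with hnm | hnm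
  · exact ⟨m, g, key n m f g hnm h⟩
  · rw [Set.inter_comm] at h ⊢
    exact ⟨n, f, key m n g f hnm h⟩

theorem cyls_gen (Ω : Type*) [Countable Ω] [MeasurableSpace Ω]
    [MeasurableSingletonClass Ω] :
    (MeasurableSpace.pi : MeasurableSpace (ℕ → Ω)) = MeasurableSpace.generateFrom (cyls Ω) := by
  apply le_antisymm
  · refine iSup_le fun i => ?_
    rw [← measurable_iff_comap_le]
    refine @measurable_to_countable' _ _ _ _ (MeasurableSpace.generateFrom (cyls Ω)) _ ?_
    intro a
    have : ((fun ξ : ℕ → Ω => ξ i) ⁻¹' {a}) =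
        ⋃ (f : {f : Fin (i+1) → Ω // f (Fin.last i) = a}), {ξ | ∀ j : Fin (i+1), ξ (j : ℕ) = f.1 j} := by
      ext ξ
      simp only [Set.mem_preimage, Set.mem_singleton_iff, Set.mem_iUnion, Set.mem_ofPred_eq]
      constructor
      · intro h
        exact ⟨⟨fun j => ξ j, by simpa using h⟩, fun j => rfl⟩
      · rintro ⟨⟨f, hf⟩, h⟩
        have := h (Fin.last i)
        simpa [hf] using this
    rw [this]
    exact MeasurableSet.iUnion fun f => MeasurableSpace.measurableSet_generateFrom ⟨_, f.1, rfl⟩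
  · apply MeasurableSpace.generateFrom_le
    rintro _ ⟨n, f, rfl⟩
    rw [Set.ofPred_forall]
    refine MeasurableSet.iInter fun i => ?_
    have h : MeasurableSet ((fun ξ : ℕ → Ω => ξ (i : ℕ)) ⁻¹' {f i}) :=
      measurable_pi_apply (i : ℕ) (measurableSet_singleton (f i))
    exact h

section
variable {Ω : Type*} [AddCommGroup Ω] [Countable Ω] [MeasurableSpace Ω]
  [MeasurableSingletonClass Ω]

theorem nu_sum (W : RandomWalk Ω) : ∑' z, W.ν {z} = 1 := by
  have := W.probν
  have h := Measure.tsum_indicator_apply_singleton W.ν Set.univ MeasurableSet.univ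
  simpa using h

theorem mu_eq (W : RandomWalk Ω) :
    W.μ = Measure.sum (fun z => W.ν {z} • W.μ.map (consPath z)) := by
  have := W.probμ
  have main : ∀ s ∈ cyls Ω, W.μ s = Measure.sum (fun z => W.ν {z} • W.μ.map (consPath z)) s := by
    rintro s ⟨n, f, rfl⟩
    have hm : MeasurableSet {ξ : ℕ → Ω | ∀ i : Fin n, ξ (i : ℕ) = f i} := by
      rw [cyls_gen]; exact MeasurableSpace.measurableSet_generateFrom ⟨_, f, rfl⟩
    rw [W.iid, Measure.sum_apply _ hm]
    simp only [Measure.smul_apply, smul_eq_mul]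
    simp_rw [Measure.map_apply (measurable_consPath _) hm]
    cases n with
    | zero => simp [nu_sum]
    | succ n =>
      rw [tsum_eq_single (f 0)]
      · rw [Fin.prod_univ_succ, ← W.iid n (fun i => f i.succ)]
        congr 2
        ext ξ
        simp [Fin.forall_fin_succ, consPath]
      · intro z hz
        have : consPath z ⁻¹' {ξ : ℕ → Ω | ∀ i : Fin (n+1), ξ (i : ℕ) = f i} = ∅ := by
          ext ξ
          simp only [Set.mem_preimage, Set.mem_ofPred_eq, Set.mem_empty_iff_false, iff_false]
          intro h
          exact hz (h 0)
        rw [this]; simp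
  refine ext_of_generate_finite (cyls Ω) (cyls_gen Ω) (cyls_pi Ω) main ?_
  exact main _ ⟨0, fun i => i.elim0, by simp⟩

theorem markov (W : RandomWalk Ω) (x : Ω) (θ : Set (ℕ → Ω)) (hθ : MeasurableSet θ) :
    W.P x θ = ∑' z, W.ν {z} * W.P (x + z) {s | consPath x s ∈ θ} := by
  have hm : MeasurableSet {ξ | walk x ξ ∈ θ} := measurable_walk x hθ
  unfold RandomWalk.P
  conv_lhs => rw [mu_eq W]
  rw [Measure.sum_apply _ hm]
  simp only [Measure.smul_apply, smul_eq_mul]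
  simp_rw [Measure.map_apply (measurable_consPath _) hm]
  simp only [Set.preimage_ofPred_eq, walk_consPath, Set.mem_ofPred_eq]

theorem lt_hit {Ω : Type*} (D : Set Ω) (s : ℕ → Ω) (j : ℕ) :
    (j : ℕ∞) < hitTime D s ↔ ∀ k ≤ j, s k ∉ D := by
  constructor
  · intro h k hk hs
    have : hitTime D s ≤ k := iInf₂_le k hs
    exact absurd (h.trans_le this) (by simpa using hk)
  · intro h
    have : ((j + 1 : ℕ) : ℕ∞) ≤ hitTime D s := by
      refine le_iInf₂ fun k hk => ?_
      have : ¬ k ≤ j := fun h' => h k h' hk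
      exact_mod_cast (by omega : j + 1 ≤ k)
    refine lt_of_lt_of_le ?_ this
    exact_mod_cast Nat.lt_succ_self j

theorem hit_eq {Ω : Type*} (D : Set Ω) (s : ℕ → Ω) (k : ℕ) :
    hitTime D s = (k : ℕ∞) ↔ s k ∈ D ∧ ∀ i < k, s i ∉ D := by
  constructor
  · intro h
    have h1 : ∀ i < k, s i ∉ D := by
      intro i hi
      exact (lt_hit D s i).1 (by rw [h]; exact_mod_cast hi) i le_rfl
    refine ⟨?_, h1⟩
    by_contra hk
    have : (k : ℕ∞) < hitTime D s := (lt_hit D s k).2 fun i hi => by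
      rcases hi.lt_or_eq with h' | rfl
      · exact h1 i h'
      · exact hk
    rw [h] at this
    exact lt_irrefl _ this
  · rintro ⟨h1, h2⟩
    apply le_antisymm
    · exact iInf₂_le k h1
    · refine le_iInf₂ fun i hi => ?_
      have : ¬ i < k := fun h' => h2 i h' hi
      exact_mod_cast (by omega : k ≤ i)

theorem hit_lt {Ω : Type*} (B C : Set Ω) (s : ℕ → Ω) :
    hitTime B s < hitTime C s ↔ ∃ k, s k ∈ B ∧ ∀ i ≤ k, s i ∉ C := by
  constructor
  · intro h
    obtain ⟨k, hk⟩ := ENat.ne_top_iff_exists.1 h.ne_top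
    rw [← hk] at h
    exact ⟨k, ((hit_eq B s k).1 hk.symm).1, (lt_hit C s k).1 h⟩
  · rintro ⟨k, h1, h2⟩
    exact lt_of_le_of_lt (iInf₂_le k h1) ((lt_hit C s k).2 h2)

theorem meas_mem (D : Set Ω) (k : ℕ) : MeasurableSet {s : ℕ → Ω | s k ∈ D} :=
  measurable_pi_apply k (MeasurableSet.of_discrete (s := D))

theorem meas_all (D : Set Ω) (p : ℕ → Prop) :
    MeasurableSet {s : ℕ → Ω | ∀ i, p i → s i ∉ D} := by
  have : {s : ℕ → Ω | ∀ i, p i → s i ∉ D} = ⋂ i, ⋂ (_ : p i), {s | s i ∈ Dᶜ} := by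
    ext s; simp
  rw [this]
  exact MeasurableSet.iInter fun i => MeasurableSet.iInter fun _ => meas_mem Dᶜ i

theorem meas_h (B C : Set Ω) : MeasurableSet {s : ℕ → Ω | hitTime B s < hitTime C s} := by
  simp only [hit_lt]
  rw [Set.ofPred_exists]
  refine MeasurableSet.iUnion fun k => (meas_mem B k).inter ?_
  exact meas_all C _

theorem meas_u (D : Set Ω) (y : Ω) (j : ℕ) :
    MeasurableSet {s : ℕ → Ω | s j = y ∧ (j : ℕ∞) < hitTime Dᶜ s} := by
  simp only [lt_hit]
  refine (meas_mem {y} j).inter ?_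
  exact meas_all Dᶜ _

theorem meas_H (D : Set Ω) (y : Ω) :
    MeasurableSet {s : ℕ → Ω | ∃ k : ℕ, hitTime D s = (k : ℕ∞) ∧ s k = y} := by
  simp only [hit_eq]
  rw [Set.ofPred_exists]
  refine MeasurableSet.iUnion fun k => MeasurableSet.inter
    (MeasurableSet.inter (meas_mem D k) ?_) (meas_mem {y} k)
  exact meas_all D _

theorem P_le_one (W : RandomWalk Ω) (x : Ω) (θ : Set (ℕ → Ω)) : W.P x θ ≤ 1 := by
  have := W.probμ
  exact prob_le_one

theorem P_mono (W : RandomWalk Ω) (x : Ω) {θ θ' : Set (ℕ → Ω)}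
    (h : ∀ s, s 0 = x → s ∈ θ → s ∈ θ') : W.P x θ ≤ W.P x θ' :=
  measure_mono fun ξ hξ => h _ (by simp [walk]) hξ

theorem P_one (W : RandomWalk Ω) (x : Ω) {θ : Set (ℕ → Ω)}
    (h : ∀ s, s 0 = x → s ∈ θ) : W.P x θ = 1 := by
  have := W.probμ
  have : {ξ | walk x ξ ∈ θ} = Set.univ := Set.eq_univ_of_forall fun ξ => h _ (by simp [walk])
  rw [RandomWalk.P, this, measure_univ]

theorem P_zero (W : RandomWalk Ω) (x : Ω) {θ : Set (ℕ → Ω)}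
    (h : ∀ s, s 0 = x → s ∉ θ) : W.P x θ = 0 := by
  have : {ξ | walk x ξ ∈ θ} = ∅ := Set.eq_empty_of_forall_notMem fun ξ => h _ (by simp [walk])
  rw [RandomWalk.P, this, measure_empty]

/-- one step inequality for `h` -/
theorem h_step (W : RandomWalk Ω) (A B C : Set Ω) (hAC : Disjoint A C) (x : Ω) (hx : x ∈ A) :
    ∑' z, W.ν {z} * W.P (x + z) {s | hitTime B s < hitTime C s} ≤
      W.P x {s | hitTime B s < hitTime C s} := by
  rw [markov W x _ (meas_h B C)]
  refine ENNReal.tsum_le_tsum fun z => ?_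
  gcongr
  refine P_mono W _ fun s _ hs => ?_
  simp only [Set.mem_ofPred_eq, hit_lt] at hs ⊢
  obtain ⟨k, h1, h2⟩ := hs
  refine ⟨k + 1, h1, fun i hi => ?_⟩
  cases i with
  | zero => exact fun h => Set.disjoint_left.1 hAC hx h
  | succ i => exact h2 i (by omega)

theorem H_step (W : RandomWalk Ω) (D : Set Ω) (x y : Ω) (hx : x ∉ D) :
    ∑' z, W.ν {z} * W.H D (x + z) y ≤ W.H D x y := by
  unfold RandomWalk.H
  rw [markov W x _ (meas_H D y)]
  refine ENNReal.tsum_le_tsum fun z => ?_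
  gcongr
  refine P_mono W _ fun s _ hs => ?_
  simp only [Set.mem_ofPred_eq, hit_eq] at hs ⊢
  obtain ⟨k, ⟨h1, h2⟩, h3⟩ := hs
  refine ⟨k + 1, ⟨h1, fun i hi => ?_⟩, h3⟩
  cases i with
  | zero => exact hx
  | succ i => exact h2 i (by omega)

/-- the time `j` sub-Markov transition -/
noncomputable def uu (W : RandomWalk Ω) (D : Set Ω) (y : Ω) (j : ℕ) (x : Ω) : ℝ≥0∞ :=
  W.P x {s | s j = y ∧ (j : ℕ∞) < hitTime Dᶜ s}

theorem uu_succ (W : RandomWalk Ω) (D : Set Ω) (y : Ω) (j : ℕ) (x : Ω) (hx : x ∈ D) :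
    uu W D y (j+1) x = ∑' z, W.ν {z} * uu W D y j (x + z) := by
  unfold uu
  rw [markov W x _ (meas_u D y (j+1))]
  refine tsum_congr fun z => ?_
  congr 2
  ext s
  simp only [Set.mem_ofPred_eq, lt_hit]
  refine and_congr Iff.rfl ⟨fun h k hk => h (k+1) (by omega), fun h k hk => ?_⟩
  cases k with
  | zero => exact fun h' => h' hx
  | succ i => exact h i (by omega)

theorem uu_out (W : RandomWalk Ω) (D : Set Ω) (y : Ω) (j : ℕ) (x : Ω) (hx : x ∉ D) :
    uu W D y j x = 0 := by
  refine P_zero W x fun s h0 hs => ?_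
  rw [Set.mem_ofPred_eq, lt_hit] at hs
  exact hs.2 0 (Nat.zero_le _) (by rw [h0]; exact hx)

noncomputable def vv (W : RandomWalk Ω) (D : Set Ω) (y : Ω) (n : ℕ) (x : Ω) : ℝ≥0∞ :=
  ∑ j ∈ Finset.range n, uu W D y j x

theorem vv_out (W : RandomWalk Ω) (D : Set Ω) (y : Ω) (n : ℕ) (x : Ω) (hx : x ∉ D) :
    vv W D y n x = 0 :=
  Finset.sum_eq_zero fun j _ => uu_out W D y j x hx

theorem vv_succ (W : RandomWalk Ω) (D : Set Ω) (y : Ω) (n : ℕ) (x : Ω) (hx : x ∈ D) :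
    vv W D y (n+1) x = uu W D y 0 x + ∑' z, W.ν {z} * vv W D y n (x + z) := by
  unfold vv
  rw [Finset.sum_range_succ', add_comm]
  congr 1
  simp_rw [Finset.mul_sum, uu_succ W D y _ x hx]
  exact (Summable.tsum_finsetSum fun _ _ => ENNReal.summable).symm

theorem vv_mono (W : RandomWalk Ω) (D : Set Ω) (y x : Ω) {m n : ℕ} (h : m ≤ n) :
    vv W D y m x ≤ vv W D y n x :=
  Finset.sum_le_sum_of_subset (Finset.range_mono h)

theorem vv_ne_top (W : RandomWalk Ω) (D : Set Ω) (y x : Ω) (n : ℕ) : vv W D y n x ≠ ⊤ :=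
  ENNReal.sum_ne_top.2 fun _ _ => ne_top_of_le_ne_top one_ne_top (P_le_one W _ _)

theorem uu_zero_ne (W : RandomWalk Ω) (D : Set Ω) (y x : Ω) (h : x ≠ y) : uu W D y 0 x = 0 :=
  P_zero W x fun s h0 hs => h (h0 ▸ hs.1)

theorem vv_max (W : RandomWalk Ω) (D : Set Ω) (y : Ω) (n m : ℕ) (hm : m ≤ n) (x : Ω) :
    vv W D y m x ≤ vv W D y n y := by
  induction m generalizing x with
  | zero => simp [vv]
  | succ m ih =>
    by_cases hxy : x = y
    · subst hxy; exact vv_mono W D _ _ hm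
    by_cases hx : x ∈ D
    · rw [vv_succ W D y m x hx, uu_zero_ne W D y x hxy, zero_add]
      calc _ ≤ ∑' z, W.ν {z} * vv W D y n y :=
            ENNReal.tsum_le_tsum fun z => by gcongr; exact ih (by omega) _
        _ = _ := by rw [ENNReal.tsum_mul_right, nu_sum, one_mul]
    · rw [vv_out W D y _ x hx]; exact zero_le

theorem vv_h (W : RandomWalk Ω) (A B C : Set Ω) (hAB : Disjoint A B) (hAC : Disjoint A C)
    (hBC : Disjoint B C) (y : Ω) (hy : y ∈ B) (n m : ℕ) (hm : m ≤ n) (x : Ω) :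
    vv W (A ∪ B) y m x ≤
      W.P x {s | hitTime B s < hitTime C s} * vv W (A ∪ B) y n y := by
  induction m generalizing x with
  | zero => simp [vv]
  | succ m ih =>
    by_cases hxB : x ∈ B
    · rw [P_one W x, one_mul]
      · exact vv_max W _ y n _ hm x
      · intro s h0
        rw [Set.mem_ofPred_eq, hit_lt]
        refine ⟨0, by rwa [h0], fun i hi => ?_⟩
        obtain rfl : i = 0 := by omega
        rw [h0]; exact fun h => Set.disjoint_left.1 hBC hxB h
    by_cases hxA : x ∈ A
    · rw [vv_succ W _ y m x (Or.inl hxA), uu_zero_ne W _ y x (fun h => hxB (h ▸ hy)), zero_add]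
      calc _ ≤ ∑' z, W.ν {z} * (W.P (x + z) {s | hitTime B s < hitTime C s}
                * vv W (A ∪ B) y n y) :=
            ENNReal.tsum_le_tsum fun z => by gcongr; exact ih (by omega) _
        _ ≤ _ := by
            simp_rw [← mul_assoc]
            rw [ENNReal.tsum_mul_right]
            gcongr
            exact h_step W A B C hAC x hxA
    · rw [vv_out W _ y _ x (by simp [hxA, hxB])]; exact zero_le

theorem vv_phi (W : RandomWalk Ω) (A B C : Set Ω) (hAB : Disjoint A B) (hAC : Disjoint A C)
    (hBC : Disjoint B C) (y : Ω) (hy : y ∈ B) 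
    (φ : Ω → ℝ≥0∞)
    (hφdef : ∀ x, φ x = ∑' a' : A,
      W.H (A ∪ C) x a' * W.P a' {s | hitTime B s < hitTime C s})
    (n m : ℕ) (hm : m ≤ n) (x : Ω) :
    vv W (A ∪ B) y m x ≤ vv W B y m x + φ x * vv W (A ∪ B) y n y := by
  induction m generalizing x with
  | zero => simp [vv]
  | succ m ih =>
    by_cases hxB : x ∈ B
    · rw [vv_succ W _ y m x (Or.inr hxB), vv_succ W _ y m x hxB, add_assoc]
      have h0 : uu W (A ∪ B) y 0 x ≤ uu W B y 0 x := by
        refine P_mono W x fun s h0 hs => ⟨hs.1, ?_⟩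
        rw [lt_hit]
        intro k hk
        obtain rfl : k = 0 := by omega
        rw [h0]; exact fun h => h hxB
      have hφ : ∑' z, W.ν {z} * φ (x + z) ≤ φ x := by
        simp_rw [hφdef, ← ENNReal.tsum_mul_left]
        rw [ENNReal.tsum_comm]
        refine ENNReal.tsum_le_tsum fun a => ?_
        simp_rw [← mul_assoc]
        rw [ENNReal.tsum_mul_right]
        gcongr
        refine H_step W _ x a ?_
        rintro (h | h)
        · exact Set.disjoint_left.1 hAB h hxB
        · exact Set.disjoint_left.1 hBC hxB h
      refine add_le_add h0 ?_
      calc _ ≤ ∑' z, (W.ν {z} * vv W B y m (x + z) +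
                W.ν {z} * φ (x + z) * vv W (A ∪ B) y n y) :=
            ENNReal.tsum_le_tsum fun z => by
              rw [mul_assoc, ← mul_add]; gcongr; exact ih (by omega) _
        _ ≤ _ := by
            rw [ENNReal.tsum_add, ENNReal.tsum_mul_right]
            gcongr
    by_cases hxA : x ∈ A
    · refine le_trans (vv_h W A B C hAB hAC hBC y hy n _ hm x) (le_trans ?_ le_add_self)
      gcongr
      rw [hφdef]
      refine le_trans ?_ (ENNReal.le_tsum (⟨x, hxA⟩ : A))
      have : W.H (A ∪ C) x x = 1 := by
        refine P_one W x fun s h0 => ⟨0, ?_, h0⟩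
        rw [hit_eq]
        exact ⟨by rw [h0]; exact Or.inl hxA, fun i hi => absurd hi (by omega)⟩
      simp [this]
    · rw [vv_out W _ y _ x (by simp [hxA, hxB])]; exact zero_le

theorem G_eq (W : RandomWalk Ω) (D : Set Ω) (x y : Ω) : W.G D x y = ⨆ n, vv W D y n x :=
  ENNReal.tsum_eq_iSup_nat

end

/-- Proposition 1, part (b): for `b, b' ∈ B` with `φ_{b'} < 1`,
`G_B(b,b') ≤ G_{A∪B}(b,b') ≤ G_B(b,b') + (φ_b/(1-φ_{b'})) G_B(b',b')`. -/
theorem prop1b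
    {Ω : Type*} [AddCommGroup Ω] [Countable Ω] [MeasurableSpace Ω]
    [MeasurableSingletonClass Ω] (W : RandomWalk Ω) (A B C : Set Ω)
    (hcover : A ∪ B ∪ C = Set.univ) (hAB : Disjoint A B) (hAC : Disjoint A C)
    (hBC : Disjoint B C) (b b' : Ω) (hb : b ∈ B) (hb' : b' ∈ B)
    (φ : Ω → ℝ≥0∞)
    (hφdef : ∀ x, φ x = ∑' a' : A,
      W.H (A ∪ C) x a' * W.P a' {s | hitTime B s < hitTime C s})
    (hφ : φ b' < 1) :
    W.G B b b' ≤ W.G (A ∪ B) b b' ∧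
      W.G (A ∪ B) b b' ≤ W.G B b b' + (φ b / (1 - φ b')) * W.G B b' b' := by

  constructor
  · refine ENNReal.tsum_le_tsum fun j => P_mono W b fun s _ hs => ⟨hs.1, ?_⟩
    have h2 := hs.2
    rw [lt_hit] at h2 ⊢
    intro k hk h
    exact h2 k hk fun h' => h (Or.inr h')
  · have hle : ∀ (D : Set Ω) (x : Ω) (n : ℕ), vv W D b' n x ≤ W.G D x b' := fun D x n => by
      rw [G_eq]; exact le_iSup (fun n => vv W D b' n x) n
    rw [G_eq W (A ∪ B)]
    refine iSup_le fun n => ?_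
    have h1 := vv_phi W A B C hAB hAC hBC b' hb' φ hφdef n n le_rfl b
    have h2 := vv_phi W A B C hAB hAC hBC b' hb' φ hφdef n n le_rfl b'
    have ht := vv_ne_top W (A ∪ B) b' b' n
    have h3 : vv W (A ∪ B) b' n b' ≤ W.G B b' b' / (1 - φ b') := by
      rw [ENNReal.le_div_iff_mul_le (Or.inl (tsub_pos_of_lt hφ).ne')
        (Or.inl (ne_top_of_le_ne_top one_ne_top tsub_le_self)),
        ENNReal.mul_sub (fun _ _ => ht), mul_one, tsub_le_iff_right, mul_comm]
      exact h2.trans (by gcongr; exact hle _ _ _)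
    refine h1.trans ?_
    rw [div_eq_mul_inv, mul_assoc, mul_comm (1 - φ b')⁻¹, ← div_eq_mul_inv]
    gcongr
    exact hle _ _ _
end

section
/- (Proposition 2, part (b)) Suppose f_A = sup_{a ∈ A} E^a(T_{B∪C}) and f_B = sup_{b ∈ B} E^b(T_{A∪C}) are finite, and ψ·σ < 1 where ψ = sup_{a ∈ A} ψ_a and σ = sup_{b ∈ B} σ_b. Then for every b ∈ B, E^b(T_{A∪C}) ≤ E^b(T_C) ≤ E^b(T_{A∪C}) + σ_b · (f_A + ψ f_B) / (1 − ψσ). -/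
open MeasureTheory ENNReal

variable {Ω : Type*} [AddCommGroup Ω] [MeasurableSpace Ω]

section Aux

set_option linter.unusedSectionVars false

def scons {Ω : Type*} (y : Ω) (ξ : ℕ → Ω) : ℕ → Ω
  | 0 => y
  | n + 1 => ξ n

lemma walk_scons_succ {Ω : Type*} [AddCommGroup Ω] (x y : Ω) (ξ : ℕ → Ω) (n : ℕ) :
    walk x (scons y ξ) (n + 1) = walk (x + y) ξ n := by
  simp only [walk, Finset.sum_range_succ', scons]
  abel

lemma walk_zero' {Ω : Type*} [AddCommGroup Ω] (x : Ω) (ξ : ℕ → Ω) : walk x ξ 0 = x := by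
  simp [walk]

lemma hitTime_of_mem {Ω : Type*} (D : Set Ω) (s : ℕ → Ω) (h : s 0 ∈ D) : hitTime D s = 0 := by
  have : hitTime D s ≤ ((0 : ℕ) : ℕ∞) := iInf₂_le 0 h
  simpa using this

lemma hitTime_of_not_mem {Ω : Type*} (D : Set Ω) (s : ℕ → Ω) (h : s 0 ∉ D) :
    hitTime D s = hitTime D (fun n => s (n + 1)) + 1 := by
  apply le_antisymm
  · by_cases hne : ∃ k, s (k + 1) ∈ D
    · have : Nonempty {k // s (k + 1) ∈ D} := ⟨⟨hne.choose, hne.choose_spec⟩⟩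
      have e : hitTime D (fun n => s (n + 1)) = ⨅ k : {k // s (k + 1) ∈ D}, ((k : ℕ) : ℕ∞) := by
        rw [hitTime, iInf_subtype]
      obtain ⟨k, hk⟩ := ciInf_mem (fun k : {k // s (k + 1) ∈ D} => ((k : ℕ) : ℕ∞))
      rw [e, ← hk]
      have : hitTime D s ≤ ((k.1 + 1 : ℕ) : ℕ∞) := iInf₂_le (k.1 + 1) k.2
      simpa using this
    · push Not at hne
      have : hitTime D (fun n => s (n + 1)) = ⊤ := by
        simp [hitTime, hne]
      simp [this]
  · refine le_iInf₂ fun k hk => ?_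
    cases k with
    | zero => exact absurd hk h
    | succ k =>
      have : hitTime D (fun n => s (n + 1)) ≤ (k : ℕ∞) := iInf₂_le k hk
      push_cast
      gcongr

lemma hit_walk_mem {Ω : Type*} [AddCommGroup Ω] (D : Set Ω) (x : Ω) (ξ : ℕ → Ω) (h : x ∈ D) :
    hitTime D (walk x ξ) = 0 :=
  hitTime_of_mem D _ (by simpa [walk_zero'] using h)

lemma hit_walk_scons {Ω : Type*} [AddCommGroup Ω] (D : Set Ω) (x y : Ω) (ξ : ℕ → Ω) (h : x ∉ D) :
    hitTime D (walk x (scons y ξ)) = hitTime D (walk (x + y) ξ) + 1 := by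
  rw [hitTime_of_not_mem D _ (by simpa [walk_zero'] using h)]
  congr 2
  funext n
  exact walk_scons_succ x y ξ n

variable {Ω : Type*} [AddCommGroup Ω] [Countable Ω] [MeasurableSpace Ω]
    [MeasurableSingletonClass Ω]

lemma measurable_scons : Measurable (fun p : Ω × (ℕ → Ω) => scons p.1 p.2) := by
  refine measurable_pi_lambda _ fun n => ?_
  cases n with
  | zero => exact measurable_fst
  | succ n => exact (measurable_pi_apply n).comp measurable_snd

lemma measurable_walk_s11 (x : Ω) (n : ℕ) : Measurable (fun ξ : ℕ → Ω => walk x ξ n) := by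
  induction n with
  | zero => simp [walk]
  | succ n ih =>
    have : (fun ξ : ℕ → Ω => walk x ξ (n + 1)) =
        (fun p : Ω × Ω => p.1 + p.2) ∘ (fun ξ : ℕ → Ω => (walk x ξ n, ξ n)) := by
      funext ξ
      simp [walk, Finset.sum_range_succ, add_assoc]
    rw [this]
    exact (Measurable.of_discrete).comp (ih.prodMk (measurable_pi_apply n))

lemma toENNReal_hitTime {Ω : Type*} (D : Set Ω) (s : ℕ → Ω) :
    (hitTime D s : ℝ≥0∞) = ⨅ (k : ℕ) (_ : s k ∈ D), (k : ℝ≥0∞) := by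
  apply le_antisymm
  · refine le_iInf₂ fun k hk => ?_
    have : hitTime D s ≤ (k : ℕ∞) := iInf₂_le k hk
    simpa using ENat.toENNReal_le.2 this
  · by_cases hne : ∃ k, s k ∈ D
    · have : Nonempty {k // s k ∈ D} := ⟨⟨hne.choose, hne.choose_spec⟩⟩
      have e : hitTime D s = ⨅ k : {k // s k ∈ D}, ((k : ℕ) : ℕ∞) := by
        rw [hitTime, iInf_subtype]
      obtain ⟨k, hk⟩ := ciInf_mem (fun k : {k // s k ∈ D} => ((k : ℕ) : ℕ∞))
      rw [e, ← hk]
      simpa using iInf₂_le (f := fun (k : ℕ) (_ : s k ∈ D) => (k : ℝ≥0∞)) k.1 k.2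
    · push Not at hne
      simp [hitTime, hne]

lemma measurable_hit' (D : Set Ω) (x : Ω) :
    Measurable (fun ξ : ℕ → Ω => (hitTime D (walk x ξ) : ℝ≥0∞)) := by
  simp only [toENNReal_hitTime]
  refine Measurable.iInf fun k => ?_
  have hm : MeasurableSet {ξ : ℕ → Ω | walk x ξ k ∈ D} :=
    measurable_walk_s11 x k (MeasurableSet.of_discrete (s := D))
  have : (fun ξ : ℕ → Ω => ⨅ (_ : walk x ξ k ∈ D), (k : ℝ≥0∞)) =
      fun ξ => open Classical in if ξ ∈ {ξ : ℕ → Ω | walk x ξ k ∈ D} then (k : ℝ≥0∞) else ⊤ := by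
    funext ξ
    by_cases h : walk x ξ k ∈ D <;> simp [h]
  rw [this]
  classical
  exact Measurable.ite hm measurable_const measurable_const

def cyl (p : Σ n : ℕ, (Fin n → Ω)) : Set (ℕ → Ω) := {ξ | ∀ i : Fin p.1, ξ (i : ℕ) = p.2 i}


lemma measurableSet_cyl (p : Σ n : ℕ, (Fin n → Ω)) : MeasurableSet (cyl p) := by
  have : cyl p = ⋂ i : Fin p.1, (fun ξ : ℕ → Ω => ξ (i : ℕ)) ⁻¹' {p.2 i} := by
    ext ξ; simp [cyl]
  rw [this]
  exact MeasurableSet.iInter fun i => measurable_pi_apply _ (measurableSet_singleton _)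

lemma cyl_inter (p q : Σ n : ℕ, (Fin n → Ω)) (h : p.1 ≤ q.1) (hne : (cyl p ∩ cyl q).Nonempty) :
    cyl p ∩ cyl q = cyl q := by
  obtain ⟨η, h1, h2⟩ := hne
  refine Set.inter_eq_right.2 fun ξ hξ i => ?_
  rw [← h1 i]
  have a := hξ ⟨i, i.2.trans_le h⟩
  have b := h2 ⟨i, i.2.trans_le h⟩
  simp only at a b
  rw [a, b]

lemma isPiSystem_cyl : IsPiSystem (Set.range (cyl (Ω := Ω))) := by
  rintro _ ⟨p, rfl⟩ _ ⟨q, rfl⟩ hne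
  rcases le_total p.1 q.1 with h | h
  · exact ⟨q, (cyl_inter p q h hne).symm⟩
  · rw [Set.inter_comm] at hne ⊢
    exact ⟨p, (cyl_inter q p h hne).symm⟩

lemma generateFrom_cyl : (MeasurableSpace.pi : MeasurableSpace (ℕ → Ω)) =
    MeasurableSpace.generateFrom (Set.range (cyl (Ω := Ω))) := by
  apply le_antisymm
  · refine iSup_le fun i => ?_
    rw [← measurable_iff_comap_le]
    refine @measurable_to_countable' _ _ _ _ (MeasurableSpace.generateFrom _) _ fun y => ?_
    have : (fun ξ : ℕ → Ω => ξ i) ⁻¹' {y} =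
        ⋃ f : {f : Fin (i + 1) → Ω // f (Fin.last i) = y}, cyl ⟨i + 1, f.1⟩ := by
      ext ξ
      simp only [Set.mem_preimage, Set.mem_singleton_iff, Set.mem_iUnion]
      constructor
      · intro h
        exact ⟨⟨fun j => ξ j, by simpa using h⟩, fun j => rfl⟩
      · rintro ⟨f, hf⟩
        have := hf (Fin.last i)
        simp only [Fin.val_last] at this
        rw [this, f.2]
    rw [this]
    exact MeasurableSet.iUnion fun f => MeasurableSpace.measurableSet_generateFrom ⟨_, rfl⟩
  · refine MeasurableSpace.generateFrom_le ?_
    rintro _ ⟨p, rfl⟩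
    exact measurableSet_cyl p

lemma RandomWalk.μ_eq (W : RandomWalk Ω) :
    W.μ = (W.ν.prod W.μ).map (fun p : Ω × (ℕ → Ω) => scons p.1 p.2) := by
  have := W.probμ
  have := W.probν
  have : IsProbabilityMeasure ((W.ν.prod W.μ).map (fun p : Ω × (ℕ → Ω) => scons p.1 p.2)) :=
    Measure.isProbabilityMeasure_map measurable_scons.aemeasurable
  refine ext_of_generate_finite _ generateFrom_cyl isPiSystem_cyl ?_ (by simp)
  rintro _ ⟨⟨n, f⟩, rfl⟩
  rw [Measure.map_apply measurable_scons (measurableSet_cyl _)]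
  cases n with
  | zero => simp [cyl]
  | succ n =>
    have : (fun p : Ω × (ℕ → Ω) => scons p.1 p.2) ⁻¹' cyl ⟨n + 1, f⟩ =
        {f 0} ×ˢ cyl ⟨n, fun i => f i.succ⟩ := by
      ext ⟨y, ξ⟩
      simp [cyl, Fin.forall_fin_succ, scons]
    rw [this, Measure.prod_prod]
    have h1 := W.iid (n + 1) f
    have h2 := W.iid n (fun i => f i.succ)
    rw [cyl, cyl, h1, h2, Fin.prod_univ_succ]

lemma RandomWalk.step (W : RandomWalk Ω) (F : (ℕ → Ω) → ℝ≥0∞) (hF : Measurable F) :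
    ∫⁻ ξ, F ξ ∂W.μ = ∫⁻ y, ∫⁻ ξ, F (scons y ξ) ∂W.μ ∂W.ν := by
  have := W.probμ
  have := W.probν
  conv_lhs => rw [W.μ_eq]
  rw [lintegral_map hF measurable_scons]
  exact lintegral_prod _ (hF.comp measurable_scons).aemeasurable

noncomputable def RandomWalk.g (W : RandomWalk Ω) (C : Set Ω) (N : ℕ) (x : Ω) : ℝ≥0∞ :=
  ∫⁻ ξ, min (hitTime C (walk x ξ) : ℝ≥0∞) N ∂W.μ

lemma RandomWalk.g_le (W : RandomWalk Ω) (C : Set Ω) (N : ℕ) (x : Ω) : W.g C N x ≤ N := by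
  have := W.probμ
  calc W.g C N x ≤ ∫⁻ _, (N : ℝ≥0∞) ∂W.μ := lintegral_mono fun ξ => min_le_right _ _
    _ = N := by simp

lemma RandomWalk.g_mono (W : RandomWalk Ω) (C : Set Ω) (N : ℕ) (x : Ω) :
    W.g C N x ≤ W.g C (N + 1) x := by
  refine lintegral_mono fun ξ => ?_
  dsimp only
  gcongr
  simp

lemma RandomWalk.g_mem (W : RandomWalk Ω) (C : Set Ω) (N : ℕ) (x : Ω) (h : x ∈ C) :
    W.g C N x = 0 := by
  simp [RandomWalk.g, hit_walk_mem C x _ h]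

lemma RandomWalk.g_step (W : RandomWalk Ω) (C : Set Ω) (N : ℕ) (x : Ω) (h : x ∉ C) :
    W.g C (N + 1) x = 1 + ∫⁻ y, W.g C N (x + y) ∂W.ν := by
  have := W.probμ
  have := W.probν
  rw [RandomWalk.g, W.step _ ((measurable_hit' C x).min measurable_const)]
  have : ∀ y, ∫⁻ ξ, min (hitTime C (walk x (scons y ξ)) : ℝ≥0∞) ((N + 1 : ℕ) : ℝ≥0∞) ∂W.μ
      = 1 + W.g C N (x + y) := by
    intro y
    simp only [hit_walk_scons C x y _ h]
    have e : ∀ ξ, min ((hitTime C (walk (x + y) ξ) + 1 : ℕ∞) : ℝ≥0∞) ((N + 1 : ℕ) : ℝ≥0∞)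
        = 1 + min (hitTime C (walk (x + y) ξ) : ℝ≥0∞) N := by
      intro ξ
      push_cast
      rw [min_add_add_right, add_comm]
    simp only [e]
    rw [lintegral_add_left measurable_const]
    simp [RandomWalk.g]
  simp only [this]
  rw [lintegral_add_left measurable_const]
  simp

lemma RandomWalk.E_step (W : RandomWalk Ω) (C : Set Ω) (x : Ω) (h : x ∉ C) :
    W.E x C = 1 + ∫⁻ y, W.E (x + y) C ∂W.ν := by
  have := W.probμ
  have := W.probν
  rw [RandomWalk.E, W.step _ (measurable_hit' C x)]
  have : ∀ y, ∫⁻ ξ, (hitTime C (walk x (scons y ξ)) : ℝ≥0∞) ∂W.μ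
      = 1 + W.E (x + y) C := by
    intro y
    simp only [hit_walk_scons C x y _ h]
    simp only [ENat.toENNReal_add, ENat.toENNReal_one]
    rw [lintegral_add_right _ measurable_const]
    simp [RandomWalk.E, add_comm]
  simp only [this]
  rw [lintegral_add_left measurable_const]
  simp

lemma measurableSet_lt_hit (A C : Set Ω) (x : Ω) :
    MeasurableSet {ξ : ℕ → Ω | walk x ξ ∈ {s | hitTime A s < hitTime C s}} := by
  have h := measurableSet_lt (measurable_hit' A x) (measurable_hit' C x)
  simpa only [ENat.toENNReal_lt, Set.mem_ofPred_eq] using h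

lemma RandomWalk.P_step (W : RandomWalk Ω) (A C : Set Ω) (x : Ω) (hA : x ∉ A) (hC : x ∉ C) :
    W.P x {s | hitTime A s < hitTime C s}
      = ∫⁻ y, W.P (x + y) {s | hitTime A s < hitTime C s} ∂W.ν := by
  rw [RandomWalk.P, ← lintegral_indicator_one (measurableSet_lt_hit A C x),
    W.step _ (measurable_one.indicator (measurableSet_lt_hit A C x))]
  refine lintegral_congr fun y => ?_
  rw [RandomWalk.P, ← lintegral_indicator_one (measurableSet_lt_hit A C (x + y))]
  refine lintegral_congr fun ξ => ?_
  simp only [Set.indicator, Set.mem_ofPred_eq, hit_walk_scons A x y _ hA, hit_walk_scons C x y _ hC]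
  congr 1
  rw [ENat.add_lt_add_iff_right (by simp)]

lemma RandomWalk.P_mem (W : RandomWalk Ω) (A C : Set Ω) (x : Ω) (hA : x ∈ A) (hC : x ∉ C) :
    W.P x {s | hitTime A s < hitTime C s} = 1 := by
  have := W.probμ
  have : {ξ | walk x ξ ∈ {s | hitTime A s < hitTime C s}} = Set.univ := by
    ext ξ
    simp [hit_walk_mem A x ξ hA, hitTime_of_not_mem C (walk x ξ) (by simpa [walk_zero'] using hC)]
  rw [RandomWalk.P, this]
  simp

lemma RandomWalk.key (W : RandomWalk Ω) (A C : Set Ω) (hAC : Disjoint A C) (N : ℕ) (x : Ω) :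
    W.g C N x ≤ W.E x (A ∪ C) +
      W.P x {s | hitTime A s < hitTime C s} * ⨆ a : A, W.g C N a := by
  induction N generalizing x with
  | zero => simp [RandomWalk.g]
  | succ N ih =>
    by_cases hC : x ∈ C
    · simp [W.g_mem C _ x hC]
    by_cases hA : x ∈ A
    · rw [W.P_mem A C x hA hC, one_mul]
      exact le_add_left (le_iSup (fun a : A => W.g C (N + 1) a) ⟨x, hA⟩)
    have hm : (⨆ a : A, W.g C N a) ≤ ⨆ a : A, W.g C (N + 1) a :=
      iSup_mono fun a => W.g_mono C N a
    rw [W.g_step C N x hC, W.E_step (A ∪ C) x (by simp [hA, hC]), W.P_step A C x hA hC]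
    calc 1 + ∫⁻ y, W.g C N (x + y) ∂W.ν
        ≤ 1 + ∫⁻ y, (W.E (x + y) (A ∪ C) +
            W.P (x + y) {s | hitTime A s < hitTime C s} * ⨆ a : A, W.g C (N + 1) a) ∂W.ν := by
          gcongr with y
          exact (ih (x + y)).trans (by gcongr)
      _ = _ := by
          rw [lintegral_add_left Measurable.of_discrete,
            lintegral_mul_const _ Measurable.of_discrete, add_assoc]

lemma RandomWalk.E_eq_iSup (W : RandomWalk Ω) (C : Set Ω) (x : Ω) :
    W.E x C = ⨆ N, W.g C N x := by
  unfold RandomWalk.g RandomWalk.E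
  rw [← lintegral_iSup (fun N => (measurable_hit' C x).min measurable_const)]
  · refine lintegral_congr fun ξ => ?_
    have := (inf_iSup_eq (hitTime C (walk x ξ) : ℝ≥0∞) (fun n : ℕ => (n : ℝ≥0∞)))
    rw [ENNReal.iSup_natCast, inf_top_eq] at this
    exact this
  · intro m n h ξ
    dsimp only
    gcongr

end Aux

/-- Proposition 2, part (b): if `f_A, f_B` are finite and `ψσ < 1`, then for
every `b ∈ B`,
`E^b(T_{A∪C}) ≤ E^b(T_C) ≤ E^b(T_{A∪C}) + σ_b (f_A + ψ f_B)/(1 - ψσ)`. -/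
theorem prop2b
    {Ω : Type*} [AddCommGroup Ω] [Countable Ω] [MeasurableSpace Ω]
    [MeasurableSingletonClass Ω] (W : RandomWalk Ω) (A B C : Set Ω)
    (hcover : A ∪ B ∪ C = Set.univ) (hAB : Disjoint A B) (hAC : Disjoint A C)
    (hBC : Disjoint B C)
    (ψ' σ' : Ω → ℝ≥0∞)
    (hψdef : ∀ x, ψ' x = W.P x {s | hitTime B s < hitTime C s})
    (hσdef : ∀ x, σ' x = W.P x {s | hitTime A s < hitTime C s})
    (fA fB ψ σ : ℝ≥0∞)
    (hfAdef : fA = ⨆ a : A, W.E a (B ∪ C)) (hfA : fA ≠ ⊤)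
    (hfBdef : fB = ⨆ b : B, W.E b (A ∪ C)) (hfB : fB ≠ ⊤)
    (hψ : ψ = ⨆ a : A, ψ' a) (hσ : σ = ⨆ b : B, σ' b)
    (hψσ : ψ * σ < 1) :
    ∀ b ∈ B, W.E b (A ∪ C) ≤ W.E b C ∧
      W.E b C ≤ W.E b (A ∪ C) + σ' b * (fA + ψ * fB) / (1 - ψ * σ) := by
  intro b hb
  refine ⟨lintegral_mono fun ξ => ?_, ?_⟩
  · exact ENat.toENNReal_le.2 (le_iInf₂ fun k hk => iInf₂_le k (Or.inr hk))
  rw [W.E_eq_iSup C b]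
  refine iSup_le fun N => ?_
  set u := ⨆ a : A, W.g C N a with hu
  set v := ⨆ b : B, W.g C N b with hv
  have hu_top : u ≠ ⊤ :=
    ne_top_of_le_ne_top (ENNReal.natCast_ne_top N) (iSup_le fun a => W.g_le C N a)
  have h1 : u ≤ fA + ψ * v := by
    refine iSup_le fun a => (W.key B C hBC N a).trans ?_
    rw [← hψdef, hfAdef, hψ]
    gcongr
    · exact le_iSup (fun a : A => W.E a (B ∪ C)) a
    · exact le_iSup (fun a : A => ψ' a) a
  have h2 : v ≤ fB + σ * u := by
    refine iSup_le fun a => (W.key A C hAC N a).trans ?_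
    rw [← hσdef, hfBdef, hσ]
    gcongr
    · exact le_iSup (fun a : B => W.E a (A ∪ C)) a
    · exact le_iSup (fun a : B => σ' a) a
  have h3 : u ≤ (fA + ψ * fB) + ψ * σ * u :=
    calc u ≤ fA + ψ * (fB + σ * u) := h1.trans (by gcongr)
      _ = _ := by ring
  have h4 : u ≤ (fA + ψ * fB) / (1 - ψ * σ) := by
    rw [ENNReal.le_div_iff_mul_le (Or.inl (tsub_pos_of_lt hψσ).ne')
      (Or.inl (ne_top_of_le_ne_top ENNReal.one_ne_top tsub_le_self)),
      ENNReal.mul_sub (fun _ _ => hu_top), mul_one, mul_comm u]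
    exact tsub_le_iff_right.2 h3
  refine (W.key A C hAC N b).trans ?_
  rw [← hσdef, mul_div_assoc]
  gcongr
end
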